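/- Let A be a unital C*-algebra and B ⊆ A a masa whose spectrum Spec(B) is totally disconnected. Assume that for every nonzero projection e ∈ B there exists an isometry s ∈ A (i.e., s*s = 1) such that sBs* ⊆ eBe. Let α be a *-automorphism of A with F_{B,α} ≠ {0}. Then there exists a unitary w ∈ A such that α(b) = w·b·w* for all b ∈ B. -/

import Mathlib

/-- `F_{B,α} = {x ∈ A : x b = α(b) x for all b ∈ B}`. -/
def Fset {A : Type*} [Mul A] (B : Set A) (α : A → A) : Set A :=
  {x | ∀ b ∈ B, x * b = α b * x}

/-!
A nonzero `x ∈ F_{B,α}` has `x* x ∈ B' = B`, so `|x| ∈ B`. As `Spec B` has enough clopen sets, `|x|`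
is invertible on one of them: there is `g ∈ B` such that `e = |x| g` is a nonzero projection. Then
`v = x g` lies in `F_{B,α}` and `v* v = e`.

For an isometry `s` with `s B s* ⊆ e B e` put `w = α(s)* v s`. It lies in `F_{B,α}` because
`s b s* ∈ B`, and `e s = s` turns `v* v = e` into `w* w = 1`. Finally, every isometry
`w ∈ F_{B,α}` is unitary: `w w*` commutes with `α(B)`, so `w w* = α(f)` with `f ∈ B`, and then
`w f = α(f) w = w`, that is, `f = 1`.
-/

section ClopenSets

open WeakDual

/-- The clopen subsets of `X` form a π-base: every nonempty open set contains a nonempty clopen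
set. If `X` is the spectrum of a commutative C*-algebra, this says that every nonzero closed ideal
contains a nonzero projection. -/
def HasClopenPiBase (X : Type*) [TopologicalSpace X] : Prop :=
  ∀ U : Set X, IsOpen U → U.Nonempty → ∃ V ⊆ U, IsClopen V ∧ V.Nonempty

theorem HasClopenPiBase.of_totallyDisconnectedSpace (X : Type*) [TopologicalSpace X]
    [CompactSpace X] [T2Space X] [TotallyDisconnectedSpace X] : HasClopenPiBase X := by
  rintro U hU ⟨x, hx⟩
  obtain ⟨V, hV, hxV, hVU⟩ := compact_exists_isClopen_in_isOpen hU hx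
  exact ⟨V, hVU, hV, x, hxV⟩

theorem HasClopenPiBase.exists_isStarProjection_mul {X 𝕜 : Type*} [TopologicalSpace X] [RCLike 𝕜]
    (hX : HasClopenPiBase X) {f : C(X, 𝕜)} (hf : f ≠ 0) :
    ∃ g : C(X, 𝕜), IsStarProjection (f * g) ∧ f * g ≠ 0 := by
  obtain ⟨V, hVf, hV, p, hp⟩ := hX {q | f q ≠ 0}
    (isOpen_ne_fun f.continuous continuous_const) (DFunLike.ne_iff.mp hf)
  let g : C(X, 𝕜) := ⟨V.indicator fun q ↦ (f q)⁻¹,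
    continuous_indicator (by simp [hV.frontier_eq])
      (f.continuous.continuousOn.inv₀ fun q hq ↦ hVf (hV.isClosed.closure_eq ▸ hq))⟩
  have hfg : ∀ q, (f * g) q = V.indicator 1 q := fun q ↦ by
    by_cases hq : q ∈ V
    · simp [g, hq, mul_inv_cancel₀ (hVf hq)]
    · simp [g, hq]
  refine ⟨g, ⟨ContinuousMap.ext fun q ↦ ?_, ContinuousMap.ext fun q ↦ ?_⟩, fun h ↦ ?_⟩
  · rw [ContinuousMap.mul_apply, hfg]
    by_cases hq : q ∈ V <;> simp [hq]
  · rw [ContinuousMap.star_apply, hfg]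
    by_cases hq : q ∈ V <;> simp [hq]
  · simpa [h, hp] using hfg p

theorem exists_isStarProjection_mul {C : Type*} [CommCStarAlgebra C]
    (hC : HasClopenPiBase (characterSpace ℂ C)) {k : C} (hk : k ≠ 0) :
    ∃ g : C, IsStarProjection (k * g) ∧ k * g ≠ 0 := by
  let Φ := gelfandStarTransform C
  obtain ⟨G, hG, hG0⟩ := hC.exists_isStarProjection_mul (f := Φ k)
    (by rwa [ne_eq, EmbeddingLike.map_eq_zero_iff])
  have hmul : k * Φ.symm G = Φ.symm (Φ k * G) := by rw [map_mul, Φ.symm_apply_apply]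
  refine ⟨Φ.symm G, ?_, ?_⟩
  · exact hmul ▸ hG.map Φ.symm
  · rwa [hmul, ne_eq, EmbeddingLike.map_eq_zero_iff]

end ClopenSets

theorem centralizer_eq_self_of_maximal {M : Type*} [Mul M] {B : Set M}
    (hcomm : ∀ b ∈ B, ∀ c ∈ B, b * c = c * b)
    (hmax : ∀ a, (∀ b ∈ B, a * b = b * a) → a ∈ B) : B.centralizer = B :=
  Set.Subset.antisymm (fun a ha ↦ hmax a fun b hb ↦ (ha b hb).symm)
    fun c hc b hb ↦ hcomm b hb c hc

theorem idempotent_mul_eq_self_of_mul_eq {M : Type*} [Monoid M] {e c s t : M}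
    (he : IsIdempotentElem e) (hts : t * s = 1) (hst : s * t = e * c * e) : e * s = s :=
  calc e * s = e * (s * t) * s := by rw [mul_assoc, mul_assoc s, hts, mul_one]
    _ = (e * e) * c * e * s := by rw [hst]; simp only [mul_assoc]
    _ = s * t * s := by rw [he.eq, hst]
    _ = s := by rw [mul_assoc, hts, mul_one]

section Semigroup

variable {A : Type*} [Semigroup A]

theorem mul_mem_Fset {B : Set A} {α : A → A} {x g : A} (hx : x ∈ Fset B α)
    (hg : g ∈ B.centralizer) : x * g ∈ Fset B α := fun b hb ↦ by
  rw [mul_assoc, ← hg b hb, ← mul_assoc, hx b hb, mul_assoc]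

variable [StarMul A] {F S : Type*} [FunLike F A A] [StarHomClass F A A] [SetLike S A]
  [StarMemClass S A] {B : S} {α : F}

theorem mul_star_of_mem_Fset {x b : A} (hx : x ∈ Fset (B : Set A) α) (hb : b ∈ B) :
    b * star x = star x * α b := by
  simpa [map_star] using congrArg star (hx (star b) (star_mem hb))

theorem star_mul_self_mem_centralizer_of_mem_Fset {x : A} (hx : x ∈ Fset (B : Set A) α) :
    star x * x ∈ (B : Set A).centralizer := fun b hb ↦ by
  rw [← mul_assoc, mul_star_of_mem_Fset hx hb, mul_assoc, ← hx b hb, mul_assoc]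

end Semigroup

section Monoid

variable {A : Type*} [Monoid A] [StarMul A] {F : Type*} [FunLike F A A] [MonoidHomClass F A A]
  [StarHomClass F A A] {α : F}

theorem star_map_mul_mul_mem_Fset {B : Set A} {s v : A} (hs : star s * s = 1)
    (hsB : ∀ b ∈ B, s * b * star s ∈ B) (hv : v ∈ Fset B α) :
    star (α s) * v * s ∈ Fset B α := fun b hb ↦ by
  have hαs : star (α s) * α s = 1 := by rw [← map_star, ← map_mul, hs, map_one]
  calc star (α s) * v * s * b
      = star (α s) * (v * (s * b * star s)) * s := by simp only [mul_assoc, hs, mul_one]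
    _ = (star (α s) * α s) * α b * (star (α s) * v * s) := by
      rw [hv _ (hsB b hb), map_mul, map_mul, map_star]; simp only [mul_assoc]
    _ = α b * (star (α s) * v * s) := by rw [hαs, one_mul]

variable {S : Type*} [SetLike S A] [StarMemClass S A] {B : S}

theorem mem_unitary_of_mem_Fset (hα : Function.Bijective α)
    (hB : (B : Set A).centralizer ⊆ B) {w : A} (hw : w ∈ Fset (B : Set A) α)
    (hw1 : star w * w = 1) : w ∈ unitary A := by
  obtain ⟨f, hf⟩ := hα.surjective (w * star w)
  have hfB : f ∈ B := hB fun b hb ↦ hα.injective <| by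
    rw [map_mul, map_mul, hf, ← mul_assoc, ← hw b hb, mul_assoc, mul_star_of_mem_Fset hw hb,
      mul_assoc]
  have hf1 : f = 1 :=
    calc f = star w * (w * f) := by rw [← mul_assoc, hw1, one_mul]
      _ = (star w * w) * (star w * w) := by rw [hw f hfB, hf]; simp only [mul_assoc]
      _ = 1 := by rw [hw1, one_mul]
  exact Unitary.mem_iff.mpr ⟨hw1, by rw [← hf, hf1, map_one]⟩

theorem star_mul_self_star_map_mul_mul_eq_one {s v : A} (hs : star s * s = 1)
    (hsB : s * star s ∈ B) (hv : v ∈ Fset (B : Set A) α) (hvs : star v * v * s = s) :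
    star (star (α s) * v * s) * (star (α s) * v * s) = 1 :=
  calc star (star (α s) * v * s) * (star (α s) * v * s)
      = star s * (star v * α (s * star s)) * v * s := by
        rw [map_mul, map_star]; simp only [star_mul, star_star, mul_assoc]
    _ = (star s * s) * star s * (star v * v * s) := by
        rw [← mul_star_of_mem_Fset hv hsB]; simp only [mul_assoc]
    _ = 1 := by rw [hvs, hs, one_mul, hs]

end Monoid

section Masa

variable {A : Type*} [CStarAlgebra A] {B : StarSubalgebra ℂ A}

theorem hasClopenPiBase_characterSpace (hB : (B : Set A).centralizer = B)
    [TotallyDisconnectedSpace (WeakDual.characterSpace ℂ B)] :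
    HasClopenPiBase (WeakDual.characterSpace ℂ B) := by
  have hclosed : IsClosed (B : Set A) := hB ▸ Set.isClosed_centralizer _
  have : CompleteSpace B := hclosed.completeSpace_coe
  exact .of_totallyDisconnectedSpace _

theorem exists_mem_isStarProjection_mul (hB : (B : Set A).centralizer = B)
    (hspec : HasClopenPiBase (WeakDual.characterSpace ℂ B)) {k : A} (hkB : k ∈ B) (hk : k ≠ 0) :
    ∃ g ∈ B, IsStarProjection (k * g) ∧ k * g ≠ 0 := by
  have : IsClosed (B : Set A) := hB ▸ Set.isClosed_centralizer _
  let : CommCStarAlgebra B :=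
    { (inferInstance : CStarAlgebra B) with
      mul_comm := fun a b ↦ Subtype.ext ((hB.ge b.2) a a.2) }
  obtain ⟨g, hg, hg0⟩ := exists_isStarProjection_mul hspec (k := ⟨k, hkB⟩)
    (Subtype.coe_ne_coe.mp hk)
  exact ⟨g, g.2, hg.map B.subtype, Subtype.coe_ne_coe.mpr hg0⟩

theorem exists_mem_Fset_isStarProjection_star_mul_self (hB : (B : Set A).centralizer = B)
    (hspec : HasClopenPiBase (WeakDual.characterSpace ℂ B)) {F : Type*} [FunLike F A A]
    [StarHomClass F A A] {α : F} {x : A} (hx : x ∈ Fset (B : Set A) α) (hx0 : x ≠ 0) :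
    ∃ v ∈ Fset (B : Set A) α,
      star v * v ∈ B ∧ IsStarProjection (star v * v) ∧ star v * v ≠ 0 := by
  let : PartialOrder A := CStarAlgebra.spectralOrder A
  have : StarOrderedRing A := CStarAlgebra.spectralOrderedRing A
  have habs : CFC.abs x ∈ B := hB.le fun b hb ↦ by
    have hcomm : Commute (star x * x) b :=
      (star_mul_self_mem_centralizer_of_mem_Fset hx b hb).symm
    exact (hcomm.cfcₙ_nnreal NNReal.sqrt).symm
  obtain ⟨g, hgB, he, he0⟩ :=
    exists_mem_isStarProjection_mul hB hspec habs (CFC.abs_eq_zero_iff.not.mpr hx0)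
  have hvv : star (x * g) * (x * g) = CFC.abs x * g :=
    calc star (x * g) * (x * g) = star g * (star x * x) * g := by
          simp only [star_mul, mul_assoc]
      _ = star (CFC.abs x * g) * (CFC.abs x * g) := by
          rw [← CFC.abs_mul_abs x, star_mul, (CFC.abs_nonneg x).isSelfAdjoint.star_eq]
          simp only [mul_assoc]
      _ = CFC.abs x * g := by rw [he.isSelfAdjoint.star_eq, he.isIdempotentElem.eq]
  refine ⟨x * g, mul_mem_Fset hx (hB.ge hgB), ?_⟩
  rw [hvv]
  exact ⟨mul_mem habs hgB, he, he0⟩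

end Masa

theorem stmt9_general {A : Type*} [CStarAlgebra A] (B : StarSubalgebra ℂ A)
    (hB : (B : Set A).centralizer = B)
    (hspec : HasClopenPiBase (WeakDual.characterSpace ℂ B))
    (hiso : ∀ e : A, e ∈ B → e ≠ 0 → star e = e → e * e = e →
      ∃ s : A, star s * s = 1 ∧ ∀ b ∈ B, ∃ c ∈ B, s * b * star s = e * c * e)
    {F : Type*} [EquivLike F A A] [MulEquivClass F A A] [StarHomClass F A A] (α : F)
    (hF : ∃ x ∈ Fset (B : Set A) ⇑α, x ≠ 0) :
    ∃ w : A, star w * w = 1 ∧ w * star w = 1 ∧ ∀ b ∈ B, α b = w * b * star w := by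
  obtain ⟨x, hx, hx0⟩ := hF
  obtain ⟨v, hv, heB, he, he0⟩ :=
    exists_mem_Fset_isStarProjection_star_mul_self hB hspec hx hx0
  obtain ⟨s, hs, hsB⟩ := hiso _ heB he0 he.isSelfAdjoint.star_eq he.isIdempotentElem.eq
  have hconj : ∀ b ∈ B, s * b * star s ∈ B := fun b hb ↦ by
    obtain ⟨c, hc, hbc⟩ := hsB b hb
    exact hbc ▸ mul_mem (mul_mem heB hc) heB
  have hs_range : s * star s ∈ B := by simpa using hconj 1 (one_mem B)
  obtain ⟨c, -, hc⟩ := hsB 1 (one_mem B)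
  have hes : star v * v * s = s :=
    idempotent_mul_eq_self_of_mul_eq he.isIdempotentElem hs (by rwa [mul_one] at hc)
  have hw := star_map_mul_mul_mem_Fset hs hconj hv
  have hw1 := star_mul_self_star_map_mul_mul_eq_one hs hs_range hv hes
  have hw2 := Unitary.mul_star_self_of_mem
    (mem_unitary_of_mem_Fset (EquivLike.bijective α) hB.le hw hw1)
  exact ⟨_, hw1, hw2, fun b hb ↦ by rw [hw b hb, mul_assoc, hw2, mul_one]⟩

/-- Let `A` be a unital C*-algebra and `B ⊆ A` a masa with totally
disconnected spectrum. Assume that for every nonzero projection `e ∈ B` there is an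
isometry `s ∈ A` with `s B s* ⊆ e B e`. If `α` is a *-automorphism of `A` with
`F_{B,α} ≠ {0}`, then there exists a unitary `w ∈ A` with `α(b) = w b w*` for all
`b ∈ B`. -/
theorem stmt9 {A : Type*} [NormedRing A] [StarRing A] [CStarRing A]
    [NormedAlgebra ℂ A] [CompleteSpace A] [StarModule ℂ A]
    (B : StarSubalgebra ℂ A)
    (hBcomm : ∀ b ∈ B, ∀ c ∈ B, b * c = c * b)
    (hBmax : ∀ a : A, (∀ b ∈ B, a * b = b * a) → a ∈ B)
    (htd : TotallyDisconnectedSpace (WeakDual.characterSpace ℂ B))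
    (hiso : ∀ e : A, e ∈ B → e ≠ 0 → star e = e → e * e = e →
      ∃ s : A, star s * s = 1 ∧ ∀ b ∈ B, ∃ c ∈ B, s * b * star s = e * c * e)
    (α : A ≃⋆ₐ[ℂ] A)
    (hF : ∃ x ∈ Fset (B : Set A) ⇑α, x ≠ 0) :
    ∃ w : A, star w * w = 1 ∧ w * star w = 1 ∧
      ∀ b ∈ B, α b = w * b * star w := by
  let : CStarAlgebra A := {}
  have hB := centralizer_eq_self_of_maximal hBcomm hBmax
  exact stmt9_general B hB (hasClopenPiBase_characterSpace hB) hiso α hF
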